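/- arXiv:2009.13218 — 2 statements merged into one kernel-verified Lean document; each statement's English description precedes it below -/
import Mathlib

section
/- Let n ≥ 3 and let A, B be mutually orthogonal n×n normal matrices over R = {0, −1}. Then for every i ∈ [n], the total number of off-diagonal zero entries in the i-th row of A plus the i-th row of B is at least 2, i.e., #{j ≠ i : A_{ij} = 0} + #{j ≠ i : B_{ij} = 0} ≥ 2. -/
/-- A matrix over `R = {0,-1} ⊆ ℤ` is normal: zero diagonal, entries `0` or `-1`. -/
def IsNormal {n : ℕ} (A : Matrix (Fin n) (Fin n) ℤ) : Prop :=
  (∀ i, A i i = 0) ∧ ∀ i j, A i j = 0 ∨ A i j = -1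

/-- Tropical (max-plus) matrix product: `(A⊙B) i j = max_k (A i k + B k j)`. -/
noncomputable def tropMul {n : ℕ} (A B : Matrix (Fin n) (Fin n) ℤ) :
    Matrix (Fin n) (Fin n) ℤ :=
  Matrix.of fun i j => sSup (Set.range fun k => A i k + B k j)

/-- Tropical sum: entrywise maximum. -/
def tropSum {n : ℕ} (A B : Matrix (Fin n) (Fin n) ℤ) : Matrix (Fin n) (Fin n) ℤ :=
  Matrix.of fun i j => max (A i j) (B i j)

/-- Number of off-diagonal zero entries in the `i`-th row of `A`. -/
def rowZeros {n : ℕ} (A : Matrix (Fin n) (Fin n) ℤ) (i : Fin n) : ℕ :=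
  (Finset.univ.filter (fun j => j ≠ i ∧ A i j = 0)).card

theorem exists_of_tropMul {n : ℕ} (A B : Matrix (Fin n) (Fin n) ℤ)
    (hA : IsNormal A) (hB : IsNormal B) (h1 : tropMul A B = 0) (i j : Fin n) :
    ∃ k, A i k = 0 ∧ B k j = 0 := by
  have h : sSup (Set.range fun k => A i k + B k j) = 0 := congrFun (congrFun h1 i) j
  have hm : sSup (Set.range fun k => A i k + B k j) ∈ Set.range fun k => A i k + B k j :=
    Int.csSup_mem ⟨_, ⟨i, rfl⟩⟩ (Set.finite_range _).bddAbove
  rw [h] at hm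
  obtain ⟨k, hk⟩ := hm
  have := hA.2 i k
  have := hB.2 k j
  simp only at hk
  exact ⟨k, by omega, by omega⟩

theorem rowZeros_aux {n : ℕ} (hn : 3 ≤ n) (A B : Matrix (Fin n) (Fin n) ℤ)
    (hA : IsNormal A) (hB : IsNormal B) (h1 : tropMul A B = 0) (i : Fin n)
    (h0 : rowZeros A i = 0) : 2 ≤ rowZeros B i := by
  have hrow : ∀ j, B i j = 0 := by
    intro j
    obtain ⟨k, hk, hk'⟩ := exists_of_tropMul A B hA hB h1 i j
    rw [rowZeros, Finset.card_eq_zero, Finset.filter_eq_empty_iff] at h0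
    have hki : k = i := by
      by_contra hne
      exact h0 (Finset.mem_univ k) ⟨hne, hk⟩
    rwa [hki] at hk'
  have hc : (Finset.univ.filter (fun j => j ≠ i ∧ B i j = 0)) = Finset.univ.erase i := by
    ext j
    simp [hrow]
  rw [rowZeros, hc, Finset.card_erase_of_mem (Finset.mem_univ i), Finset.card_univ,
    Fintype.card_fin]
  omega

theorem stmt_8 {n : ℕ} (hn : 3 ≤ n) (A B : Matrix (Fin n) (Fin n) ℤ)
    (hA : IsNormal A) (hB : IsNormal B)
    (h1 : tropMul A B = 0) (h2 : tropMul B A = 0) :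
    ∀ i : Fin n, 2 ≤ rowZeros A i + rowZeros B i := by
  intro i
  have ha := rowZeros_aux hn A B hA hB h1 i
  have hb := rowZeros_aux hn B A hB hA h2 i
  omega
end

section
/- (Characterization of minimal pairs.) Let n = 2 or n ≥ 7. A pair (A, B) of n×n normal matrices over R = {0, −1} is a minimal mutually orthogonal pair if and only if A ≠ B and there exist k, m ∈ [n] with k ≠ m such that one of the following four cases holds: (0) A is V(m;k)-generic and B is V(k;m)-generic; (1) A is (W(m;k) ∩ Z(k;m))-generic and B is (W(k;m) ∩ Z(m;k))-generic; (2) A is W(m;k)-generic and B is (W(k;m) ∩ Z(m;k) ∩ Z(k;m))-generic; (3) A is (W(m;k) ∩ Z(m;k) ∩ Z(k;m))-generic and B is W(k;m)-generic. -/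
/-- `nu A` is the number of zero entries of `A`. -/
def nu {n : ℕ} (A : Matrix (Fin n) (Fin n) ℤ) : ℕ :=
  (Finset.univ.filter (fun p : Fin n × Fin n => A p.1 p.2 = 0)).card

/-- `A` is `V(m;k)`-generic. -/
def genV {n : ℕ} (m k : Fin n) (A : Matrix (Fin n) (Fin n) ℤ) : Prop :=
  ∀ i j, A i j = 0 ↔ (i = j ∨ i = m ∨ j = k)

/-- `A` is `W(m;k)`-generic. -/
def genW {n : ℕ} (m k : Fin n) (A : Matrix (Fin n) (Fin n) ℤ) : Prop :=
  ∀ i j, A i j = 0 ↔ (i = j ∨ (i = m ∧ j ≠ k) ∨ (j = k ∧ i ≠ m))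

/-- `A` is `(W(m;k) ∩ Z(k;m))`-generic. -/
def genWZ {n : ℕ} (m k : Fin n) (A : Matrix (Fin n) (Fin n) ℤ) : Prop :=
  ∀ i j, A i j = 0 ↔ (i = j ∨ (i = m ∧ j ≠ k) ∨ (j = k ∧ i ≠ m) ∨ (i = k ∧ j = m))

/-- `A` is `(W(m;k) ∩ Z(m;k) ∩ Z(k;m))`-generic. -/
def genWZZ {n : ℕ} (m k : Fin n) (A : Matrix (Fin n) (Fin n) ℤ) : Prop :=
  ∀ i j, A i j = 0 ↔ (i = j ∨ i = m ∨ j = k ∨ (i = k ∧ j = m))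


/-- Combinatorial form of mutual orthogonality, through the zero sets of the rows. -/
def RowOrth {n : ℕ} (P Q : Fin n → Finset (Fin n)) : Prop :=
  (∀ i, i ∈ P i) ∧ (∀ i, i ∈ Q i) ∧ (∀ i j, ∃ k ∈ P i, j ∈ Q k) ∧ (∀ i j, ∃ k ∈ Q i, j ∈ P k)

/-- The shape of the two special rows of a minimal pair. -/
def RowStruct {n : ℕ} (P Q : Fin n → Finset (Fin n)) (x y : Fin n) : Prop :=
  x ≠ y ∧ (∀ j, j ≠ x → j ≠ y → P j = {j, x} ∧ Q j = {j, y}) ∧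
  ((Q x = Finset.univ ∧ P x = {x}) ∨ (Q x = Finset.univ.erase y ∧ P x = {x, y})) ∧
  ((P y = Finset.univ ∧ Q y = {y}) ∨ (P y = Finset.univ.erase x ∧ Q y = {y, x}))

namespace RowOrth

variable {n : ℕ} {P Q : Fin n → Finset (Fin n)}

theorem symm (h : RowOrth P Q) : RowOrth Q P := ⟨h.2.1, h.1, h.2.2.2, h.2.2.1⟩

theorem pos (h : RowOrth P Q) (i : Fin n) : 1 ≤ (P i).card :=
  Finset.card_pos.mpr ⟨i, h.1 i⟩

theorem le_n (i : Fin n) : (P i).card ≤ n := by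
  simpa using Finset.card_le_univ (P i)

theorem bound (h : RowOrth P Q) (i : Fin n) : n ≤ ∑ k ∈ P i, (Q k).card := by
  have h1 : (P i).biUnion Q = Finset.univ := by
    ext j
    simpa using h.2.2.1 i j
  have := Finset.card_biUnion_le (s := P i) (t := Q)
  rw [h1] at this
  simpa using this

theorem one (h : RowOrth P Q) (i : Fin n) (hi : (P i).card = 1) : (Q i).card = n := by
  have hb := h.bound i
  obtain ⟨a, ha⟩ := Finset.card_eq_one.mp hi
  have : i = a := by have := h.1 i; rw [ha] at this; simpa using this
  subst this
  rw [ha] at hb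
  have := le_n (P := Q) i
  simp at hb
  omega

theorem two (h : RowOrth P Q) (i : Fin n) (hi : (P i).card = 2) :
    ∃ x, x ≠ i ∧ P i = {i, x} ∧ n ≤ (Q i).card + (Q x).card := by
  have hb := h.bound i
  obtain ⟨x, hx⟩ : ∃ x, (P i).erase i = {x} := by
    apply Finset.card_eq_one.mp
    rw [Finset.card_erase_of_mem (h.1 i), hi]
  have hxi : x ≠ i := by
    have : x ∈ (P i).erase i := by rw [hx]; simp
    exact (Finset.mem_erase.mp this).1
  have hP : P i = {i, x} := by
    rw [← Finset.insert_erase (h.1 i), hx]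
  refine ⟨x, hxi, hP, ?_⟩
  rw [hP, Finset.sum_pair hxi.symm] at hb
  exact hb

end RowOrth

theorem sum_two {n : ℕ} (g : Fin n → ℕ) (x y : Fin n) (h : x ≠ y) : g x + g y ≤ ∑ i, g i := by
  rw [← Finset.sum_pair h]
  exact Finset.sum_le_sum_of_subset (Finset.subset_univ _)

theorem sum_three {n : ℕ} (g : Fin n → ℕ) (x y z : Fin n) (h : x ≠ y) (h1 : z ≠ x) (h2 : z ≠ y) :
    g z + g x + g y ≤ ∑ i, g i := by
  have : ∑ i ∈ ({z, x, y} : Finset (Fin n)), g i = g z + g x + g y := by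
    rw [Finset.sum_insert (by simp [h1, h2]), Finset.sum_pair h, add_assoc]
  rw [← this]
  exact Finset.sum_le_sum_of_subset (Finset.subset_univ _)

theorem excess {n : ℕ} (f : Fin n → ℕ) (c : ℕ) (h : ∀ i, c ≤ f i) :
    ∑ i, f i = ∑ i, (f i - c) + c * n := by
  have : ∑ i, f i = ∑ i, ((f i - c) + c) := Finset.sum_congr rfl fun i _ => by have := h i; omega
  rw [this, Finset.sum_add_distrib]
  simp [mul_comm]

/-- No row of total size four: the sum is too large. -/
theorem case_five {n : ℕ} (hn : 7 ≤ n) {P Q : Fin n → Finset (Fin n)} (h : RowOrth P Q)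
    (h5 : ∀ i, 5 ≤ (P i).card + (Q i).card) (i : Fin n) (hp : (P i).card = 2)
    (hq : (Q i).card = 3) (hs : ∑ i, ((P i).card + (Q i).card) ≤ 6 * n - 6) : False := by
  rw [excess _ 5 h5] at hs
  obtain ⟨x, hxi, hP, hx⟩ := h.two i hp
  have b := fun j => h.pos j
  have b' := fun j => h.symm.pos j
  have o := fun j => h.one j
  have o' := fun j => h.symm.one j
  have hx2 : (P x).card = 2 ∧ ∀ j, j ≠ x → (P j).card + (Q j).card = 5 := by
    have s1 := Finset.single_le_sum (f := fun i => (P i).card + (Q i).card - 5)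
      (fun _ _ => Nat.zero_le _) (Finset.mem_univ x)
    have := b x
    have := o x
    refine ⟨by (try simp only at s1); omega, fun j hj => ?_⟩
    have := sum_two (fun i => (P i).card + (Q i).card - 5) j x hj
    have := h5 j
    try simp only at *
    omega
  have all2 : ∀ j, (P j).card = 2 := by
    intro j
    by_cases hj : j = x
    · rw [hj]; exact hx2.1
    have e := hx2.2 j hj
    have := b j
    have := o j
    have := b' j
    have := o' j
    by_contra hne
    have hq2 : (Q j).card = 2 := by omega
    obtain ⟨w, hw, -, hw2⟩ := h.symm.two j hq2
    by_cases hwx : w = x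
    · rw [hwx] at hw2; omega
    have := hx2.2 w hwx
    have := b' w
    have := o' w
    omega
  have := h.symm.bound i
  simp only [all2] at this
  simp at this
  omega

theorem case_four_aux {n : ℕ} (hn : 7 ≤ n) {P Q : Fin n → Finset (Fin n)} (h : RowOrth P Q)
    (h4 : ∀ i, 4 ≤ (P i).card + (Q i).card) (i x y : Fin n) (hxy : x ≠ y)
    (hxi : x ≠ i) (hyi : y ≠ i)
    (hp : P i = {i, x}) (hq : Q i = {i, y})
    (hQx : n ≤ 2 + (Q x).card) (hPy : n ≤ 2 + (P y).card)
    (hs : ∑ i, ((P i).card + (Q i).card - 4) ≤ 2 * n - 6) :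
    RowStruct P Q x y := by
  have b := fun j => h.pos j
  have b' := fun j => h.symm.pos j
  have o := fun j => h.one j
  have o' := fun j => h.symm.one j
  have gx : n ≤ (P x).card + (Q x).card := by
    have := b x; have := o x; omega
  have gy : n ≤ (P y).card + (Q y).card := by
    have := b' y; have := o' y; omega
  have uniq : ∀ w, n ≤ 2 + (Q w).card → w = x := by
    intro w hw
    by_contra hwx
    by_cases hwy : w = y
    · subst hwy
      have := sum_two (fun i => (P i).card + (Q i).card - 4) _ _ hxy
      try simp only at this
      omega
    · have := sum_three (fun i => (P i).card + (Q i).card - 4) _ _ _ hxy hwx hwy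
      have := b w
      have := o w
      try simp only at *
      omega
  have uniq' : ∀ w, n ≤ 2 + (P w).card → w = y := by
    intro w hw
    by_contra hwy
    by_cases hwx : w = x
    · subst hwx
      have := sum_two (fun i => (P i).card + (Q i).card - 4) _ _ hxy
      try simp only at this
      omega
    · have := sum_three (fun i => (P i).card + (Q i).card - 4) _ _ _ hxy hwx hwy
      have := b' w
      have := o' w
      try simp only at *
      omega
  have typ : ∀ j, (P j).card + (Q j).card = 4 → P j = {j, x} ∧ Q j = {j, y} := by
    intro j hj
    have := b j
    have := o j
    have := b' j
    have := o' j
    have hpj : (P j).card = 2 := by omega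
    have hqj : (Q j).card = 2 := by omega
    obtain ⟨u, -, hu, hu2⟩ := h.two j hpj
    obtain ⟨v, -, hv, hv2⟩ := h.symm.two j hqj
    rw [hqj] at hu2
    rw [hpj] at hv2
    rw [uniq u hu2] at hu
    rw [uniq' v hv2] at hv
    exact ⟨hu, hv⟩
  obtain ⟨j, hji, hjx, hjy, hj4⟩ : ∃ j, j ≠ i ∧ j ≠ x ∧ j ≠ y ∧ (P j).card + (Q j).card = 4 := by
    by_contra hcon
    push Not at hcon
    have hle : ∑ j ∈ ({x, y} : Finset (Fin n)) ∪ ({x, y, i} : Finset (Fin n))ᶜ,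
        ((P j).card + (Q j).card - 4) ≤ ∑ j, ((P j).card + (Q j).card - 4) :=
      Finset.sum_le_sum_of_subset (Finset.subset_univ _)
    rw [Finset.sum_union, Finset.sum_pair hxy] at hle
    · have h1 : ({x, y, i} : Finset (Fin n))ᶜ.card • 1 ≤
          ∑ j ∈ ({x, y, i} : Finset (Fin n))ᶜ, ((P j).card + (Q j).card - 4) := by
        apply Finset.card_nsmul_le_sum
        intro w hw
        simp at hw
        have := hcon w hw.2.2 hw.1 hw.2.1
        have := h4 w
        omega
      rw [Finset.card_compl] at h1
      have : ({x, y, i} : Finset (Fin n)).card ≤ 3 := Finset.card_le_three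
      simp only [Fintype.card_fin, smul_eq_mul] at h1
      omega
    · rw [Finset.disjoint_left]
      intro a ha
      simp at ha ⊢
      tauto
  obtain ⟨hPj, hQj⟩ := typ j hj4
  have subx : ∀ w, w ≠ y → w ∈ Q x := by
    intro w hw
    have h1 := h.2.2.1 i w
    have h2 := h.2.2.1 j w
    rw [hp] at h1
    rw [hPj] at h2
    simp [hq, hQj, hw] at h1 h2
    rcases h1 with h1 | h1
    · rcases h2 with h2 | h2
      · exact absurd (h2.symm.trans h1) hji
      · exact h2
    · exact h1
  have suby : ∀ w, w ≠ x → w ∈ P y := by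
    intro w hw
    have h1 := h.2.2.2 i w
    have h2 := h.2.2.2 j w
    rw [hq] at h1
    rw [hQj] at h2
    simp [hp, hPj, hw] at h1 h2
    rcases h1 with h1 | h1
    · rcases h2 with h2 | h2
      · exact absurd (h2.symm.trans h1) hji
      · exact h2
    · exact h1
  have shx : Q x = Finset.univ ∨ Q x = Finset.univ.erase y := by
    by_cases hy : y ∈ Q x
    · left; ext w; by_cases hw : w = y
      · simp [hw, hy]
      · simp [subx w hw]
    · right; ext w; by_cases hw : w = y
      · simp [hw, hy]
      · simp [subx w hw, hw]
  have shy : P y = Finset.univ ∨ P y = Finset.univ.erase x := by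
    by_cases hy : x ∈ P y
    · left; ext w; by_cases hw : w = x
      · simp [hw, hy]
      · simp [suby w hw]
    · right; ext w; by_cases hw : w = x
      · simp [hw, hy]
      · simp [suby w hw, hw]
  have cx : (Q x).card = n ∧ Q x = Finset.univ ∨ (Q x).card = n - 1 ∧ Q x = Finset.univ.erase y := by
    rcases shx with e | e
    · left; exact ⟨by rw [e]; simp, e⟩
    · right; exact ⟨by rw [e]; simp, e⟩
  have cy : (P y).card = n ∧ P y = Finset.univ ∨ (P y).card = n - 1 ∧ P y = Finset.univ.erase x := by
    rcases shy with e | e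
    · left; exact ⟨by rw [e]; simp, e⟩
    · right; exact ⟨by rw [e]; simp, e⟩
  have gx : n + 1 ≤ (P x).card + (Q x).card := by
    have := b x; have := o x; omega
  have gy : n + 1 ≤ (P y).card + (Q y).card := by
    have := b' y; have := o' y; omega
  have s2 := sum_two (fun i => (P i).card + (Q i).card - 4) _ _ hxy
  have fx : (P x).card + (Q x).card = n + 1 := by (try simp only at s2); omega
  have fy : (P y).card + (Q y).card = n + 1 := by (try simp only at s2); omega
  have rest : ∀ j, j ≠ x → j ≠ y → P j = {j, x} ∧ Q j = {j, y} := by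
    intro j hx hy
    apply typ
    have := sum_three (fun i => (P i).card + (Q i).card - 4) _ _ _ hxy hx hy
    have := h4 j
    try simp only at this
    omega
  refine ⟨hxy, rest, ?_, ?_⟩
  · rcases cx with ⟨c, e⟩ | ⟨c, e⟩
    · left
      refine ⟨e, ?_⟩
      symm
      apply Finset.eq_of_subset_of_card_le
      · simpa using h.1 x
      · rw [Finset.card_singleton]; omega
    · right
      refine ⟨e, ?_⟩
      have hy : y ∈ P x := by
        obtain ⟨k, hk, hk2⟩ := h.2.2.2 x y
        rw [e] at hk
        have hky : k ≠ y := (Finset.mem_erase.mp hk).1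
        by_cases hkx : k = x
        · rwa [hkx] at hk2
        · rw [(rest k hkx hky).1] at hk2
          simp [hxy.symm, hky.symm] at hk2
      symm
      apply Finset.eq_of_subset_of_card_le
      · intro w hw
        simp at hw
        rcases hw with rfl | rfl
        · exact h.1 _
        · exact hy
      · rw [Finset.card_pair hxy]; omega
  · rcases cy with ⟨c, e⟩ | ⟨c, e⟩
    · left
      refine ⟨e, ?_⟩
      symm
      apply Finset.eq_of_subset_of_card_le
      · simpa using h.2.1 y
      · rw [Finset.card_singleton]; omega
    · right
      refine ⟨e, ?_⟩
      have hy : x ∈ Q y := by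
        obtain ⟨k, hk, hk2⟩ := h.2.2.1 y x
        rw [e] at hk
        have hky : k ≠ x := (Finset.mem_erase.mp hk).1
        by_cases hkx : k = y
        · rwa [hkx] at hk2
        · rw [(rest k hky hkx).2] at hk2
          simp [hxy, hky.symm] at hk2
      symm
      apply Finset.eq_of_subset_of_card_le
      · intro w hw
        simp at hw
        rcases hw with rfl | rfl
        · exact h.2.1 _
        · exact hy
      · rw [Finset.card_pair hxy.symm]; omega

/-- The case of one common out-neighbour cannot occur below the bound. -/
theorem case_four_eq {n : ℕ} (hn : 7 ≤ n) {P Q : Fin n → Finset (Fin n)} (h : RowOrth P Q)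
    (h4 : ∀ i, 4 ≤ (P i).card + (Q i).card) (i x : Fin n) (hxi : x ≠ i)
    (hp : P i = {i, x}) (hq : Q i = {i, x})
    (hs : ∑ i, ((P i).card + (Q i).card - 4) ≤ 2 * n - 6) : False := by
  have b := fun j => h.pos j
  have b' := fun j => h.symm.pos j
  have o := fun j => h.one j
  have o' := fun j => h.symm.one j
  have subQ : Finset.univ.erase i ⊆ Q x := by
    intro w hw
    have hwi := (Finset.mem_erase.mp hw).1
    have h1 := h.2.2.1 i w
    rw [hp] at h1
    simp [hq, hwi] at h1
    rcases h1 with rfl | h1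
    · exact h.2.1 _
    · exact h1
  have subP : Finset.univ.erase i ⊆ P x := by
    intro w hw
    have hwi := (Finset.mem_erase.mp hw).1
    have h1 := h.2.2.2 i w
    rw [hq] at h1
    simp [hp, hwi] at h1
    rcases h1 with rfl | h1
    · exact h.1 _
    · exact h1
  have cQ := Finset.card_le_card subQ
  have cP := Finset.card_le_card subP
  simp at cQ cP
  have s1 := Finset.single_le_sum (f := fun i => (P i).card + (Q i).card - 4)
      (fun _ _ => Nat.zero_le _) (Finset.mem_univ x)
  try simp only at s1
  have hiQ : i ∉ Q x := by
    have : Q x = Finset.univ.erase i := by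
      symm
      apply Finset.eq_of_subset_of_card_le subQ
      simp
      omega
    rw [this]; simp
  have h4' : ∀ j, j ≠ x → (P j).card = 2 ∧ (Q j).card = 2 := by
    intro j hj
    have s2 := sum_two (fun i => (P i).card + (Q i).card - 4) _ _ hj
    have := h4 j
    have := b j
    have := o j
    have := b' j
    have := o' j
    try simp only at s2
    omega
  have key : ∀ j, j ≠ x → P j = {j, x} ∧ Q j = {j, x} := by
    intro j hj
    obtain ⟨hpj, hqj⟩ := h4' j hj
    obtain ⟨u, -, hu, hu2⟩ := h.two j hpj
    obtain ⟨v, -, hv, hv2⟩ := h.symm.two j hqj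
    have eu : u = x := by
      by_contra hne
      have := h4' u hne
      omega
    have ev : v = x := by
      by_contra hne
      have := h4' v hne
      omega
    subst eu
    subst ev
    exact ⟨hu, hv⟩
  obtain ⟨j, hj⟩ : ∃ j, j ∉ ({i, x} : Finset (Fin n)) := by
    by_contra hcon
    push Not at hcon
    have h1 : (Finset.univ : Finset (Fin n)).card ≤ ({i, x} : Finset (Fin n)).card :=
      Finset.card_le_card fun w _ => hcon w
    have : ({i, x} : Finset (Fin n)).card ≤ 2 := Finset.card_le_two
    simp at h1
    omega
  simp at hj
  obtain ⟨k, hk, hk2⟩ := h.2.2.1 j i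
  rw [(key j hj.2).1] at hk
  simp at hk
  rcases hk with rfl | rfl
  · rw [(key k hj.2).2] at hk2
    simp at hk2
    rcases hk2 with e | e
    · exact hj.1 e.symm
    · exact hxi e.symm
  · exact hiQ hk2

theorem key_large {n : ℕ} (hn : 7 ≤ n) {P Q : Fin n → Finset (Fin n)} (h : RowOrth P Q)
    (hs : ∑ i, ((P i).card + (Q i).card) ≤ 6 * n - 6) : ∃ x y, RowStruct P Q x y := by
  have b := fun j => h.pos j
  have b' := fun j => h.symm.pos j
  have o := fun j => h.one j
  have o' := fun j => h.symm.one j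
  have h4 : ∀ i, 4 ≤ (P i).card + (Q i).card := by
    intro i
    have := b i
    have := o i
    have := b' i
    have := o' i
    omega
  by_cases hex : ∃ i, (P i).card + (Q i).card = 4
  · obtain ⟨i, hi⟩ := hex
    have := b i
    have := o i
    have := b' i
    have := o' i
    have hp : (P i).card = 2 := by omega
    have hq : (Q i).card = 2 := by omega
    obtain ⟨x, hx, hP, hx2⟩ := h.two i hp
    obtain ⟨y, hy, hQ, hy2⟩ := h.symm.two i hq
    rw [excess _ 4 h4] at hs
    have hs' : ∑ i, ((P i).card + (Q i).card - 4) ≤ 2 * n - 6 := by omega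
    by_cases hxy : x = y
    · subst hxy
      exact (case_four_eq hn h h4 i x hx hP hQ hs').elim
    · exact ⟨x, y, case_four_aux hn h h4 i x y hxy hx hy hP hQ (by omega) (by omega) hs'⟩
  · exfalso
    push Not at hex
    have h5 : ∀ i, 5 ≤ (P i).card + (Q i).card := by
      intro i
      have := h4 i
      have := hex i
      omega
    by_cases hex5 : ∃ i, (P i).card + (Q i).card = 5
    · obtain ⟨i, hi⟩ := hex5
      have := b i
      have := o i
      have := b' i
      have := o' i
      by_cases hp : (P i).card = 2
      · exact case_five hn h h5 i hp (by omega) hs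
      · refine case_five hn h.symm (fun i => by have := h5 i; omega) i (by omega) (by omega) ?_
        simpa only [add_comm] using hs
    · push Not at hex5
      rw [excess _ 6 (fun i => by have := h5 i; have := hex5 i; omega)] at hs
      omega

set_option synthInstance.maxSize 2000 in
set_option synthInstance.maxHeartbeats 400000 in
set_option maxHeartbeats 1000000 in
theorem key_two {P Q : Fin 2 → Finset (Fin 2)} (h : RowOrth P Q)
    (hs : ∑ i, ((P i).card + (Q i).card) ≤ 6 * 2 - 6) : ∃ x y, RowStruct P Q x y := by
  have key : ∀ P Q : Fin 2 → Finset (Fin 2), ((∀ i, i ∈ P i) ∧ (∀ i, i ∈ Q i) ∧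
      (∀ i j, ∃ k ∈ P i, j ∈ Q k) ∧ (∀ i j, ∃ k ∈ Q i, j ∈ P k)) →
      ∑ i, ((P i).card + (Q i).card) ≤ 6 * 2 - 6 → ∃ x y, (x ≠ y ∧
      (∀ j, j ≠ x → j ≠ y → P j = {j, x} ∧ Q j = {j, y}) ∧
      ((Q x = Finset.univ ∧ P x = {x}) ∨ (Q x = Finset.univ.erase y ∧ P x = {x, y})) ∧
      ((P y = Finset.univ ∧ Q y = {y}) ∨ (P y = Finset.univ.erase x ∧ Q y = {y, x}))) := by
    decide +kernel
  exact key P Q h hs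

theorem key_all {n : ℕ} (hn : n = 2 ∨ 7 ≤ n) {P Q : Fin n → Finset (Fin n)} (h : RowOrth P Q)
    (hs : ∑ i, ((P i).card + (Q i).card) ≤ 6 * n - 6) : ∃ x y, RowStruct P Q x y := by
  rcases hn with rfl | hn
  · exact key_two h hs
  · exact key_large hn h hs

theorem struct_sum {n : ℕ} {P Q : Fin n → Finset (Fin n)} {x y : Fin n}
    (h : RowStruct P Q x y) : ∑ i, ((P i).card + (Q i).card) = 6 * n - 6 := by
  obtain ⟨hxy, hr, hx, hy⟩ := h
  have hn : 2 ≤ n := by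
    have : ({x, y} : Finset (Fin n)).card ≤ Fintype.card (Fin n) := Finset.card_le_univ _
    rwa [Finset.card_pair hxy, Fintype.card_fin] at this
  have fx : (P x).card + (Q x).card = n + 1 := by
    rcases hx with ⟨e1, e2⟩ | ⟨e1, e2⟩
    · rw [e1, e2]; simp; omega
    · rw [e1, e2, Finset.card_pair hxy]; simp; omega
  have fy : (P y).card + (Q y).card = n + 1 := by
    rcases hy with ⟨e1, e2⟩ | ⟨e1, e2⟩
    · rw [e1, e2]; simp
    · rw [e1, e2, Finset.card_pair hxy.symm]; simp; omega
  rw [← Finset.sum_add_sum_compl ({x, y} : Finset (Fin n)), Finset.sum_pair hxy, fx, fy]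
  have : ∑ i ∈ ({x, y} : Finset (Fin n))ᶜ, ((P i).card + (Q i).card)
      = ∑ i ∈ ({x, y} : Finset (Fin n))ᶜ, 4 := by
    apply Finset.sum_congr rfl
    intro j hj
    simp at hj
    rw [(hr j hj.1 hj.2).1, (hr j hj.1 hj.2).2, Finset.card_pair hj.1, Finset.card_pair hj.2]
  rw [this]
  rw [Finset.sum_const, Finset.card_compl, Finset.card_pair hxy, Fintype.card_fin, smul_eq_mul]
  omega

theorem struct_orth {n : ℕ} {P Q : Fin n → Finset (Fin n)} {x y : Fin n}
    (h : RowStruct P Q x y) : RowOrth P Q := by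
  obtain ⟨hxy, hr, hx, hy⟩ := h
  have m1 : ∀ i, i ∈ P i := by
    intro i
    by_cases h1 : i = x
    · subst h1; rcases hx with ⟨_, e⟩ | ⟨_, e⟩ <;> simp [e]
    by_cases h2 : i = y
    · subst h2; rcases hy with ⟨e, _⟩ | ⟨e, _⟩ <;> simp [e, h1]
    simp [(hr i h1 h2).1]
  have m2 : ∀ i, i ∈ Q i := by
    intro i
    by_cases h2 : i = y
    · subst h2; rcases hy with ⟨_, e⟩ | ⟨_, e⟩ <;> simp [e]
    by_cases h1 : i = x
    · subst h1; rcases hx with ⟨e, _⟩ | ⟨e, _⟩ <;> simp [e, h2]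
    simp [(hr i h1 h2).2]
  have qx : ∀ j, j ≠ y → j ∈ Q x := by
    intro j hj; rcases hx with ⟨e, _⟩ | ⟨e, _⟩ <;> simp [e, hj]
  have py : ∀ j, j ≠ x → j ∈ P y := by
    intro j hj; rcases hy with ⟨e, _⟩ | ⟨e, _⟩ <;> simp [e, hj]
  have ox : y ∈ P x ∨ y ∈ Q x := by
    rcases hx with ⟨e, _⟩ | ⟨_, e⟩ <;> simp [e]
  have oy : x ∈ P y ∨ x ∈ Q y := by
    rcases hy with ⟨e, _⟩ | ⟨_, e⟩ <;> simp [e]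
  have px : ∀ i, i ≠ y → x ∈ P i := by
    intro i hi
    by_cases h1 : i = x
    · rw [h1]; exact m1 x
    simp [(hr i h1 hi).1]
  have qy : ∀ i, i ≠ x → y ∈ Q i := by
    intro i hi
    by_cases h1 : i = y
    · rw [h1]; exact m2 y
    simp [(hr i hi h1).2]
  refine ⟨m1, m2, fun i j => ?_, fun i j => ?_⟩
  · by_cases hi : i = y
    · subst hi
      by_cases hj : j = x
      · subst hj
        rcases oy with e | e
        · exact ⟨_, e, m2 _⟩
        · exact ⟨_, m1 _, e⟩
      · exact ⟨j, py j hj, m2 j⟩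
    · by_cases hj : j = y
      · subst hj
        by_cases hix : i = x
        · subst hix
          rcases ox with e | e
          · exact ⟨_, e, m2 _⟩
          · exact ⟨_, m1 _, e⟩
        · exact ⟨i, m1 i, qy i hix⟩
      · exact ⟨x, px i hi, qx j hj⟩
  · by_cases hi : i = x
    · subst hi
      by_cases hj : j = y
      · subst hj
        rcases ox with e | e
        · exact ⟨_, m2 _, e⟩
        · exact ⟨_, e, m1 _⟩
      · exact ⟨j, qx j hj, m1 j⟩
    · by_cases hj : j = x
      · subst hj
        by_cases hiy : i = y
        · subst hiy
          rcases oy with e | e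
          · exact ⟨_, m2 _, e⟩
          · exact ⟨_, e, m1 _⟩
        · exact ⟨i, m2 i, px i hiy⟩
      · exact ⟨y, qy i hi, py j hj⟩

/-- The zero set of a row. -/
def zrow {n : ℕ} (A : Matrix (Fin n) (Fin n) ℤ) (i : Fin n) : Finset (Fin n) :=
  Finset.univ.filter fun j => A i j = 0

theorem mem_zrow {n : ℕ} (A : Matrix (Fin n) (Fin n) ℤ) (i j : Fin n) :
    j ∈ zrow A i ↔ A i j = 0 := by simp [zrow]

theorem nu_eq {n : ℕ} (A : Matrix (Fin n) (Fin n) ℤ) : nu A = ∑ i, (zrow A i).card := by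
  unfold nu zrow
  simp only [Finset.card_filter]
  rw [Fintype.sum_prod_type]

theorem nu_add {n : ℕ} (A B : Matrix (Fin n) (Fin n) ℤ) :
    nu A + nu B = ∑ i, ((zrow A i).card + (zrow B i).card) := by
  rw [nu_eq, nu_eq, Finset.sum_add_distrib]

theorem nonpos_of_normal {n : ℕ} {A : Matrix (Fin n) (Fin n) ℤ} (hA : IsNormal A) (i j : Fin n) :
    A i j ≤ 0 := by
  rcases hA.2 i j with h | h <;> omega

theorem trop_iff {n : ℕ} {A B : Matrix (Fin n) (Fin n) ℤ} (hA : IsNormal A) (hB : IsNormal B) :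
    tropMul A B = 0 ↔ ∀ i j, ∃ k, A i k = 0 ∧ B k j = 0 := by
  have hne : ∀ i j : Fin n, (Set.range fun k => A i k + B k j).Nonempty :=
    fun i j => ⟨_, ⟨i, rfl⟩⟩
  have hbd : ∀ i j : Fin n, BddAbove (Set.range fun k => A i k + B k j) := by
    intro i j
    refine ⟨0, ?_⟩
    rintro _ ⟨k, rfl⟩
    have := nonpos_of_normal hA i k
    have := nonpos_of_normal hB k j
    simp only
    omega
  constructor
  · intro h i j
    have h1 : sSup (Set.range fun k => A i k + B k j) = 0 := by
      have := congrFun (congrFun h i) j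
      simpa [tropMul] using this
    have h2 := Int.csSup_mem (hne i j) (hbd i j)
    rw [h1] at h2
    obtain ⟨k, hk⟩ := h2
    have := nonpos_of_normal hA i k
    have := nonpos_of_normal hB k j
    simp only at hk
    exact ⟨k, by omega, by omega⟩
  · intro h
    ext i j
    obtain ⟨k, h1, h2⟩ := h i j
    change sSup (Set.range fun k => A i k + B k j) = 0
    apply le_antisymm
    · apply csSup_le (hne i j)
      rintro _ ⟨k, rfl⟩
      have := nonpos_of_normal hA i k
      have := nonpos_of_normal hB k j
      simp only
      omega
    · apply le_csSup (hbd i j)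
      exact ⟨k, by simp [h1, h2]⟩

theorem orth_iff {n : ℕ} {A B : Matrix (Fin n) (Fin n) ℤ} (hA : IsNormal A) (hB : IsNormal B) :
    (tropMul A B = 0 ∧ tropMul B A = 0) ↔ RowOrth (zrow A) (zrow B) := by
  rw [trop_iff hA hB, trop_iff hB hA]
  unfold RowOrth
  simp only [mem_zrow]
  exact ⟨fun h => ⟨hA.1, hB.1, h.1, h.2⟩, fun h => h.2.2⟩

theorem gen_struct {n : ℕ} {A B : Matrix (Fin n) (Fin n) ℤ} {k m : Fin n} (hkm : k ≠ m)
    (h : (genV m k A ∧ genV k m B) ∨ (genWZ m k A ∧ genWZ k m B) ∨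
       (genW m k A ∧ genWZZ k m B) ∨ (genWZZ m k A ∧ genW k m B)) :
    RowStruct (zrow A) (zrow B) k m := by
  have hmk := hkm.symm
  refine ⟨hkm, ?_, ?_, ?_⟩
  · intro j h1 h2
    rcases h with ⟨a, b⟩ | ⟨a, b⟩ | ⟨a, b⟩ | ⟨a, b⟩ <;> constructor <;> ext w <;>
      simp only [mem_zrow, a j w, b j w, Finset.mem_insert, Finset.mem_singleton] <;> grind
  · rcases h with ⟨a, b⟩ | ⟨a, b⟩ | ⟨a, b⟩ | ⟨a, b⟩
    · left; constructor <;> ext w <;> simp only [mem_zrow, a k w, b k w, Finset.mem_univ, Finset.mem_insert, Finset.mem_singleton] <;> grind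
    · right; constructor <;> ext w <;> simp only [mem_zrow, a k w, b k w, Finset.mem_erase, Finset.mem_univ, Finset.mem_insert, Finset.mem_singleton] <;> grind
    · left; constructor <;> ext w <;> simp only [mem_zrow, a k w, b k w, Finset.mem_univ, Finset.mem_insert, Finset.mem_singleton] <;> grind
    · right; constructor <;> ext w <;> simp only [mem_zrow, a k w, b k w, Finset.mem_erase, Finset.mem_univ, Finset.mem_insert, Finset.mem_singleton] <;> grind
  · rcases h with ⟨a, b⟩ | ⟨a, b⟩ | ⟨a, b⟩ | ⟨a, b⟩
    · left; constructor <;> ext w <;> simp only [mem_zrow, a m w, b m w, Finset.mem_univ, Finset.mem_insert, Finset.mem_singleton] <;> grind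
    · right; constructor <;> ext w <;> simp only [mem_zrow, a m w, b m w, Finset.mem_erase, Finset.mem_univ, Finset.mem_insert, Finset.mem_singleton] <;> grind
    · right; constructor <;> ext w <;> simp only [mem_zrow, a m w, b m w, Finset.mem_erase, Finset.mem_univ, Finset.mem_insert, Finset.mem_singleton] <;> grind
    · left; constructor <;> ext w <;> simp only [mem_zrow, a m w, b m w, Finset.mem_univ, Finset.mem_insert, Finset.mem_singleton] <;> grind

theorem struct_gen {n : ℕ} {A B : Matrix (Fin n) (Fin n) ℤ} {k m : Fin n}
    (h : RowStruct (zrow A) (zrow B) k m) :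
    (genV m k A ∧ genV k m B) ∨ (genWZ m k A ∧ genWZ k m B) ∨
       (genW m k A ∧ genWZZ k m B) ∨ (genWZZ m k A ∧ genW k m B) := by
  obtain ⟨hkm, hr, hx, hy⟩ := h
  have hmk := hkm.symm
  have ra : ∀ i j, i ≠ k → i ≠ m → (A i j = 0 ↔ (j = i ∨ j = k)) := by
    intro i j h1 h2
    rw [← mem_zrow, (hr i h1 h2).1]; simp
  have rb : ∀ i j, i ≠ k → i ≠ m → (B i j = 0 ↔ (j = i ∨ j = m)) := by
    intro i j h1 h2
    rw [← mem_zrow, (hr i h1 h2).2]; simp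
  clear hr
  simp only [Finset.ext_iff, mem_zrow, Finset.mem_erase, Finset.mem_univ, Finset.mem_insert,
    Finset.mem_singleton] at hx hy
  rcases hx with ⟨x1, x2⟩ | ⟨x1, x2⟩ <;> rcases hy with ⟨y1, y2⟩ | ⟨y1, y2⟩
  · left
    constructor <;> intro i j <;> by_cases h1 : i = k <;> by_cases h2 : i = m <;> grind
  · right; right; left
    constructor <;> intro i j <;> by_cases h1 : i = k <;> by_cases h2 : i = m <;> grind
  · right; right; right
    constructor <;> intro i j <;> by_cases h1 : i = k <;> by_cases h2 : i = m <;> grind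
  · right; left
    constructor <;> intro i j <;> by_cases h1 : i = k <;> by_cases h2 : i = m <;> grind

theorem struct_ne {n : ℕ} {A B : Matrix (Fin n) (Fin n) ℤ} {k m : Fin n}
    (h : RowStruct (zrow A) (zrow B) k m) : A ≠ B := by
  rintro rfl
  obtain ⟨hkm, -, hx, -⟩ := h
  have hmk := hkm.symm
  rcases hx with ⟨e1, e2⟩ | ⟨e1, e2⟩
  · rw [e1] at e2
    have : m ∈ ({k} : Finset (Fin n)) := by rw [← e2]; simp
    simp [hmk] at this
  · rw [e1] at e2
    have : m ∈ Finset.univ.erase m := by rw [e2]; simp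
    simp at this

/-- A standard `V(m;k)`-generic matrix. -/
def stdV {n : ℕ} (m k : Fin n) : Matrix (Fin n) (Fin n) ℤ :=
  Matrix.of fun i j => if i = j ∨ i = m ∨ j = k then 0 else -1

theorem stdV_gen {n : ℕ} (m k : Fin n) : genV m k (stdV m k) := by
  intro i j
  simp only [stdV, Matrix.of_apply]
  split_ifs with h
  · simp only [h]
  · simp only [h]

theorem stdV_normal {n : ℕ} (m k : Fin n) : IsNormal (stdV m k) := by
  refine ⟨fun i => by simp [stdV], fun i j => ?_⟩
  simp only [stdV, Matrix.of_apply]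
  split_ifs <;> simp

theorem stmt_12 {n : ℕ} (hn : n = 2 ∨ 7 ≤ n) (A B : Matrix (Fin n) (Fin n) ℤ)
    (hA : IsNormal A) (hB : IsNormal B) :
    (tropMul A B = 0 ∧ tropMul B A = 0 ∧
      ∀ A' B' : Matrix (Fin n) (Fin n) ℤ, IsNormal A' → IsNormal B' →
        tropMul A' B' = 0 → tropMul B' A' = 0 → nu A + nu B ≤ nu A' + nu B') ↔
    (A ≠ B ∧ ∃ k m : Fin n, k ≠ m ∧
      ((genV m k A ∧ genV k m B) ∨
       (genWZ m k A ∧ genWZ k m B) ∨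
       (genW m k A ∧ genWZZ k m B) ∨
       (genWZZ m k A ∧ genW k m B))) := by
  constructor
  · rintro ⟨h1, h2, hmin⟩
    have hO := (orth_iff hA hB).mp ⟨h1, h2⟩
    have h2n : 2 ≤ n := by omega
    let k : Fin n := ⟨0, by omega⟩
    let m : Fin n := ⟨1, by omega⟩
    have hkm : k ≠ m := by simp [k, m]
    have hS := gen_struct hkm (Or.inl ⟨stdV_gen m k, stdV_gen k m⟩)
    obtain ⟨o1, o2⟩ := (orth_iff (stdV_normal m k) (stdV_normal k m)).mpr (struct_orth hS)
    have hle := hmin _ _ (stdV_normal m k) (stdV_normal k m) o1 o2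
    rw [nu_add, nu_add, struct_sum hS] at hle
    obtain ⟨x, y, hxy⟩ := key_all hn hO hle
    exact ⟨struct_ne hxy, x, y, hxy.1, struct_gen hxy⟩
  · rintro ⟨-, k, m, hkm, h⟩
    have hS := gen_struct hkm h
    obtain ⟨o1, o2⟩ := (orth_iff hA hB).mpr (struct_orth hS)
    refine ⟨o1, o2, fun A' B' hA' hB' h1 h2 => ?_⟩
    by_contra hlt
    push Not at hlt
    rw [nu_add A B, struct_sum hS, nu_add] at hlt
    obtain ⟨x, y, hxy⟩ := key_all hn ((orth_iff hA' hB').mp ⟨h1, h2⟩) hlt.le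
    rw [struct_sum hxy] at hlt
    exact lt_irrefl _ hlt
end
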